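/- arXiv:1405.6618 — 2 statements merged into one kernel-verified Lean document; each statement's English description precedes it below -/
import Mathlib

section
/- For every nonnegative integer n and complex numbers q, x with no vanishing denominators: sum over k from 0 to n of (q^{-3n};q^3)_k * (x;q)_k (q/x;q)_k / ((q;q)_k (-q;q)_k (q^{3/2};q)_k (-q^{1/2};q)_k (q^{-1-3n};q)_k) * q^k equals (1-x)/((1+q^{1/2})(1-xq^{-1/2})) * ((q^3 x;q^3)_n (q^3/x;q^3)_n)/((q^2;q^3)_n (q^4;q^3)_n) + (1-xq^{-1})/((1+q^{-1/2})(1-xq^{-1/2})) * ((q^2 x;q^3)_n (q^4/x;q^3)_n)/((q^2;q^3)_n (q^4;q^3)_n). -/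
/-- q-Pochhammer symbol `(a; q)_k`. -/
noncomputable def qpoch (a q : ℂ) (k : ℕ) : ℂ := ∏ j ∈ Finset.range k, (1 - a * q ^ j)

theorem qpoch_zero (a q : ℂ) : qpoch a q 0 = 1 := by simp [qpoch]

theorem qpoch_succ (a q : ℂ) (k : ℕ) : qpoch a q (k + 1) = qpoch a q k * (1 - a * q ^ k) := by
  simp [qpoch, Finset.prod_range_succ]

theorem qpoch_succ_left (a q : ℂ) (k : ℕ) :
    qpoch a q (k + 1) = (1 - a) * qpoch (a * q) q k := by
  simp only [qpoch, Finset.prod_range_succ']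
  rw [mul_comm]
  simp [pow_succ', mul_assoc]

theorem qpoch_ne_zero {a q : ℂ} {k : ℕ} (h : ∀ j < k, a * q ^ j ≠ 1) : qpoch a q k ≠ 0 := by
  rw [qpoch, Finset.prod_ne_zero_iff]
  intro j hj
  exact sub_ne_zero.2 (h j (Finset.mem_range.1 hj)).symm

/-- Coefficients of the terminating expansion of `(q³x; q³)ₙ (q³/x; q³)ₙ` in the basis
`(qx; q)ₖ (q/x; q)ₖ`, up to normalization. -/
noncomputable def gosperCoeff (q : ℂ) (n k : ℕ) : ℂ :=
  qpoch (q ^ (-(3*n : ℤ))) (q^3) k * q ^ k /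
    (qpoch (q^2) q (2*k) * qpoch (q ^ (-1 - 3*n : ℤ)) q k)

theorem zpow_neg_three_mul (q : ℂ) (n : ℕ) : q ^ (-(3*n : ℤ)) = (q ^ (3*n))⁻¹ := by
  rw [zpow_neg, ← zpow_natCast]
  simp

theorem zpow_neg_one_sub_three_mul (q : ℂ) (n : ℕ) :
    q ^ (-1 - 3*n : ℤ) = (q ^ (3*n+1))⁻¹ := by
  rw [show (-1 - 3*n : ℤ) = -((3*n+1 : ℕ) : ℤ) by push_cast; ring, zpow_neg, zpow_natCast]

theorem inv_pow_mul_pow_ne_one {q : ℂ} (hq : q ≠ 0) (hr : ∀ j : ℕ, 0 < j → q ^ j ≠ 1)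
    {m j : ℕ} (h : j < m) : (q ^ m)⁻¹ * q ^ j ≠ 1 := by
  intro e
  apply hr (m - j) (by omega)
  rw [pow_sub₀ q hq h.le, ← div_eq_mul_inv, div_eq_one_iff_eq (pow_ne_zero _ hq)]
  rw [inv_mul_eq_one₀ (pow_ne_zero _ hq)] at e
  exact e

theorem gosperCoeff_zero (q : ℂ) (n : ℕ) : gosperCoeff q n 0 = 1 := by
  simp [gosperCoeff, qpoch_zero]

theorem gosperCoeff_eq_zero {q : ℂ} (hq : q ≠ 0) (n : ℕ) : gosperCoeff q n (n+1) = 0 := by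
  have h : qpoch (q ^ (-(3*n : ℤ))) (q^3) (n+1) = 0 := by
    rw [qpoch_succ, zpow_neg_three_mul, ← pow_mul, inv_mul_cancel₀ (pow_ne_zero _ hq)]
    simp
  rw [gosperCoeff, h, zero_mul, zero_div]

theorem gosperCoeff_succ_succ {q : ℂ} (hq : q ≠ 0) (hr : ∀ j : ℕ, 0 < j → q ^ j ≠ 1)
    {n j : ℕ} (hj : j ≤ n) :
    (1 - q ^ (3*n+2)) * (1 - q ^ (3*n+4)) * gosperCoeff q (n+1) (j+1) =
      (1 - q ^ (3*n+2) / q ^ (j+1)) * (1 - q ^ (3*n+4) * q ^ (j+1)) * gosperCoeff q n (j+1) +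
        q ^ (3*n+2) / q ^ j * gosperCoeff q n j := by
  have hB : qpoch ((q ^ (3*n+1))⁻¹) q (j+1) ≠ 0 :=
    qpoch_ne_zero fun i hi => inv_pow_mul_pow_ne_one hq hr (by omega)
  have hE : qpoch ((q ^ (3*n+4))⁻¹) q (j+1) ≠ 0 :=
    qpoch_ne_zero fun i hi => inv_pow_mul_pow_ne_one hq hr (by omega)
  have hD : qpoch (q^2) q (2*(j+1)) ≠ 0 :=
    qpoch_ne_zero fun i hi => by rw [← pow_add]; exact hr _ (by omega)
  have hEB : qpoch ((q ^ (3*n+4))⁻¹) q (j+1) *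
      ((1 - (q ^ (3*n+4))⁻¹ * q ^ (j+1)) * (1 - (q ^ (3*n+4))⁻¹ * q ^ (j+2))) =
      (1 - (q ^ (3*n+4))⁻¹) * (1 - (q ^ (3*n+3))⁻¹) * (1 - (q ^ (3*n+2))⁻¹) *
        qpoch ((q ^ (3*n+1))⁻¹) q j := by
    have e : ∀ m : ℕ, (q ^ (m+1))⁻¹ * q = (q ^ m)⁻¹ := fun m => by
      rw [pow_succ]; field_simp
    rw [← mul_assoc, ← qpoch_succ, ← qpoch_succ, qpoch_succ_left, qpoch_succ_left,
      qpoch_succ_left, e, e, e]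
    ring
  have h1 := sub_ne_zero.2 (inv_pow_mul_pow_ne_one hq hr (show j+1 < 3*n+4 by omega)).symm
  have h2 := sub_ne_zero.2 (inv_pow_mul_pow_ne_one hq hr (show j+2 < 3*n+4 by omega)).symm
  have hA : qpoch ((q ^ (3*n+3))⁻¹) (q^3) (j+1) =
      (1 - (q ^ (3*n+3))⁻¹) * qpoch ((q ^ (3*n))⁻¹) (q^3) j := by
    rw [qpoch_succ_left]
    congr 2
    rw [pow_add]
    field_simp
  have hEB' := eq_div_of_mul_eq (mul_ne_zero h1 h2) hEB
  simp only [gosperCoeff, zpow_neg_three_mul, zpow_neg_one_sub_three_mul]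
  rw [show 3*(n+1)+1 = 3*n+4 by ring, show 3*(n+1) = 3*n+3 by ring, hA]
  rw [hEB'] at hE ⊢
  rw [qpoch_succ] at hB ⊢
  rw [show 2*(j+1) = 2*j+1+1 by ring, qpoch_succ, qpoch_succ] at hD ⊢
  rw [qpoch_succ]
  simp only [← pow_add] at hD ⊢
  obtain ⟨⟨hD0, hD1⟩, hD2⟩ : (_ ∧ _) ∧ _ := by simpa only [mul_ne_zero_iff] using hD
  obtain ⟨hB0, hB1⟩ := mul_ne_zero_iff.1 hB
  have f2 : 1 - (q ^ (3*n+2))⁻¹ ≠ 0 := by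
    simpa using sub_ne_zero.2 (inv_pow_mul_pow_ne_one hq hr (show 0 < 3*n+2 by omega)).symm
  have f3 : 1 - (q ^ (3*n+3))⁻¹ ≠ 0 := by
    simpa using sub_ne_zero.2 (inv_pow_mul_pow_ne_one hq hr (show 0 < 3*n+3 by omega)).symm
  have f4 : 1 - (q ^ (3*n+4))⁻¹ ≠ 0 := by
    simpa using sub_ne_zero.2 (inv_pow_mul_pow_ne_one hq hr (show 0 < 3*n+4 by omega)).symm
  clear hB hE hD hEB hEB' hA hr
  generalize qpoch (q ^ 2) q (2 * j) = D at *
  generalize qpoch ((q ^ (3*n+1))⁻¹) q j = B at *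
  generalize qpoch ((q ^ (3*n))⁻¹) (q^3) j = A at *
  have e1 : q ^ (2 + 2*j) = q^2 * (q^j)^2 := by ring
  have e2 : q ^ (2 + (2*j+1)) = q^3 * (q^j)^2 := by ring
  have e3 : (q^3)^j = (q^j)^3 := by ring
  rw [e3]
  simp only [e1, e2, pow_add] at *
  have hw : q ^ (3*n) ≠ 0 := pow_ne_zero _ hq
  have hy : q ^ j ≠ 0 := pow_ne_zero _ hq
  generalize q ^ (3*n) = w at *
  generalize q ^ j = y at *
  have g {a b : ℂ} (hb : b ≠ 0) : 1 - b⁻¹ * a = (b - a) / b := by field_simp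
  have g' {b : ℂ} (hb : b ≠ 0) : 1 - b⁻¹ = (b - 1) / b := by field_simp
  have n1 : w * q ^ 1 ≠ 0 := by simp [hw, hq]
  have n2 : w * q ^ 2 ≠ 0 := by simp [hw, hq]
  have n3 : w * q ^ 3 ≠ 0 := by simp [hw, hq]
  have n4 : w * q ^ 4 ≠ 0 := by simp [hw, hq]
  rw [g' n2] at f2 ⊢
  rw [g' n3] at f3 ⊢
  rw [g' n4] at f4 ⊢
  rw [g n4] at h1 h2
  rw [g n1] at hB1 ⊢
  have k1 := (div_ne_zero_iff.1 h1).1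
  have k2 := (div_ne_zero_iff.1 h2).1
  have kB := (div_ne_zero_iff.1 hB1).1
  have k3 := (div_ne_zero_iff.1 f3).1
  have k4 := (div_ne_zero_iff.1 f4).1
  have k5 := (div_ne_zero_iff.1 f2).1
  clear h1 h2 hB1 f2 f3 f4
  have l1 : w * q^4 - y * q ^ 1 = q * (w * q^3 - y) := by ring
  have l2 : w * q^4 - y * q ^ 2 = q^2 * (w * q^2 - y) := by ring
  rw [g n4, g n4, g hw, l1, l2]
  rw [l1] at k1
  rw [l2] at k2
  have m1 := right_ne_zero_of_mul k1
  have m2 := right_ne_zero_of_mul k2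
  rw [pow_one] at *
  clear k1 k2 l1 l2
  field_simp
  ring

theorem sum_gosperCoeff {q x : ℂ} (hq : q ≠ 0) (hx : x ≠ 0)
    (hr : ∀ j : ℕ, 0 < j → q ^ j ≠ 1) (n : ℕ) :
    ∑ k ∈ Finset.range (n+1), gosperCoeff q n k * (qpoch (q*x) q k * qpoch (q/x) q k) =
      (qpoch (q^3*x) (q^3) n * qpoch (q^3/x) (q^3) n) /
        (qpoch (q^2) (q^3) n * qpoch (q^4) (q^3) n) := by
  induction n with
  | zero => simp [gosperCoeff_zero, qpoch_zero]
  | succ n ih =>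
    have h2 : 1 - q ^ (3*n+2) ≠ 0 := sub_ne_zero.2 (hr _ (by omega)).symm
    have h4 : 1 - q ^ (3*n+4) ≠ 0 := sub_ne_zero.2 (hr _ (by omega)).symm
    have key : (1 - q ^ (3*n+2)) * (1 - q ^ (3*n+4)) *
        ∑ k ∈ Finset.range (n+1+1),
          gosperCoeff q (n+1) k * (qpoch (q*x) q k * qpoch (q/x) q k) =
        (1 - q ^ (3*n+3) * x) * (1 - q ^ (3*n+3) / x) *
        ∑ k ∈ Finset.range (n+1), gosperCoeff q n k * (qpoch (q*x) q k * qpoch (q/x) q k) := by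
      set φ : ℕ → ℂ := fun k => qpoch (q*x) q k * qpoch (q/x) q k with hφ
      have hstep : ∀ k, (1 - q ^ (3*n+3) * x) * (1 - q ^ (3*n+3) / x) * φ k =
          (1 - q ^ (3*n+2) / q ^ k) * (1 - q ^ (3*n+4) * q ^ k) * φ k +
            q ^ (3*n+2) / q ^ k * φ (k+1) := fun k => by
        simp only [hφ, qpoch_succ]
        have hy : q ^ k ≠ 0 := pow_ne_zero _ hq
        simp only [pow_add]
        field_simp
        ring
      have hL : ∀ j ∈ Finset.range (n+1),
          (1 - q ^ (3*n+2)) * (1 - q ^ (3*n+4)) * (gosperCoeff q (n+1) (j+1) * φ (j+1)) =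
          (1 - q ^ (3*n+2) / q ^ (j+1)) * (1 - q ^ (3*n+4) * q ^ (j+1)) *
              (gosperCoeff q n (j+1) * φ (j+1)) +
            q ^ (3*n+2) / q ^ j * (gosperCoeff q n j * φ (j+1)) := fun j hj => by
        have := gosperCoeff_succ_succ hq hr (Nat.lt_succ_iff.1 (Finset.mem_range.1 hj))
        linear_combination φ (j+1) * this
      have hR : ∀ k ∈ Finset.range (n+1),
          (1 - q ^ (3*n+3) * x) * (1 - q ^ (3*n+3) / x) * (gosperCoeff q n k * φ k) =
          (1 - q ^ (3*n+2) / q ^ k) * (1 - q ^ (3*n+4) * q ^ k) * (gosperCoeff q n k * φ k) +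
            q ^ (3*n+2) / q ^ k * (gosperCoeff q n k * φ (k+1)) := fun k _ => by
        linear_combination gosperCoeff q n k * hstep k
      change _ * ∑ k ∈ Finset.range (n+1+1), gosperCoeff q (n+1) k * φ k =
        _ * ∑ k ∈ Finset.range (n+1), gosperCoeff q n k * φ k
      have hshift := (Finset.sum_range_succ' (fun k => (1 - q ^ (3*n+2) / q ^ k) *
        (1 - q ^ (3*n+4) * q ^ k) * (gosperCoeff q n k * φ k)) (n+1)).symm.trans
        (Finset.sum_range_succ _ (n+1))
      rw [Finset.mul_sum, Finset.mul_sum, Finset.sum_congr rfl hR, Finset.sum_range_succ',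
        Finset.sum_congr rfl hL, Finset.sum_add_distrib, Finset.sum_add_distrib]
      simp only [gosperCoeff_eq_zero hq, gosperCoeff_zero, pow_zero, div_one, mul_one, one_mul,
        zero_mul, mul_zero, add_zero] at hshift ⊢
      linear_combination hshift
    rw [ih] at key
    have e2 : (1 : ℂ) - q^2 * (q^3)^n = 1 - q ^ (3*n+2) := by ring
    have e4 : (1 : ℂ) - q^4 * (q^3)^n = 1 - q ^ (3*n+4) := by ring
    have e3 : (1 : ℂ) - q^3 * x * (q^3)^n = 1 - q ^ (3*n+3) * x := by ring
    have e3' : (1 : ℂ) - q^3 / x * (q^3)^n = 1 - q ^ (3*n+3) / x := by ring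
    rw [qpoch_succ, qpoch_succ, qpoch_succ, qpoch_succ, e2, e4, e3, e3']
    apply mul_left_cancel₀ (mul_ne_zero h2 h4)
    rw [key]
    field_simp

theorem qpoch_sq_two_mul (s : ℂ) (k : ℕ) :
    qpoch ((s^2)^2) (s^2) (2*k) * (1 + s) =
      qpoch (s^2) (s^2) k * qpoch (-s^2) (s^2) k * qpoch (s^2*s) (s^2) k * qpoch (-s) (s^2) k *
        (1 + s * (s^2)^k) := by
  induction k with
  | zero => simp [qpoch_zero]
  | succ k ih =>
    rw [show 2*(k+1) = 2*k+1+1 by ring]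
    simp only [qpoch_succ]
    linear_combination (1 - (s^2)^2 * (s^2)^(2*k)) * (1 - (s^2)^2 * (s^2)^(2*k+1)) * ih

/-- The identity when `q` is not a root of unity. -/
theorem gosper_sum_of_not_root_of_unity (n : ℕ) {x s : ℂ} (hs : s ≠ 0) (hx : x ≠ 0) (hxs : x ≠ s)
    (hr : ∀ j : ℕ, 0 < j → s ^ j ≠ 1) :
    ∑ k ∈ Finset.range (n+1),
      qpoch ((s^2) ^ (-(3*n : ℤ))) ((s^2)^3) k * (qpoch x (s^2) k * qpoch (s^2/x) (s^2) k) /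
        (qpoch (s^2) (s^2) k * qpoch (-s^2) (s^2) k * qpoch (s^2*s) (s^2) k *
          qpoch (-s) (s^2) k * qpoch ((s^2) ^ (-1 - 3*n : ℤ)) (s^2) k) * (s^2)^k
      = (1 - x) / ((1 + s) * (1 - x/s)) *
          ((qpoch ((s^2)^3*x) ((s^2)^3) n * qpoch ((s^2)^3/x) ((s^2)^3) n) /
            (qpoch ((s^2)^2) ((s^2)^3) n * qpoch ((s^2)^4) ((s^2)^3) n))
        + (1 - x/s^2) / ((1 + 1/s) * (1 - x/s)) *
          ((qpoch ((s^2)^2*x) ((s^2)^3) n * qpoch ((s^2)^4/x) ((s^2)^3) n) /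
            (qpoch ((s^2)^2) ((s^2)^3) n * qpoch ((s^2)^4) ((s^2)^3) n)) := by
  have hq : s^2 ≠ 0 := pow_ne_zero _ hs
  have hrq : ∀ j : ℕ, 0 < j → (s^2) ^ j ≠ 1 := fun j hj => by
    rw [← pow_mul]; exact hr _ (by omega)
  have hneg : ∀ j : ℕ, 0 < j → 1 + s ^ j ≠ 0 := fun j hj h => by
    apply hr (j*2) (by omega)
    rw [pow_mul, eq_neg_of_add_eq_zero_right h]
    norm_num
  have hA := sum_gosperCoeff hq hx hrq n
  have hB := sum_gosperCoeff hq (div_ne_zero hx hq) hrq n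
  rw [show (s^2)^3 * (x/s^2) = (s^2)^2*x by field_simp,
    show (s^2)^3 / (x/s^2) = (s^2)^4/x by field_simp] at hB
  rw [← hA, ← hB, Finset.mul_sum, Finset.mul_sum, ← Finset.sum_add_distrib]
  refine Finset.sum_congr rfl fun k _ => ?_
  have hs1 : 1 + s ≠ 0 := by simpa using hneg 1 one_pos
  have hsx : s - x ≠ 0 := sub_ne_zero.2 hxs.symm
  have hsk : 1 + s * (s^2)^k ≠ 0 := by
    rw [← pow_mul, ← pow_succ']; exact hneg _ (by omega)
  have h1 : (1 - x) * qpoch (s^2*x) (s^2) k = qpoch x (s^2) k * (1 - x * (s^2)^k) := by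
    rw [← qpoch_succ, qpoch_succ_left, mul_comm x]
  have h2 : (1 - x/s^2) * qpoch (s^2/(x/s^2)) (s^2) k =
      qpoch (s^2/x) (s^2) k * ((s^2)^k - x/s^2) := by
    have h := (qpoch_succ_left (s^2/x) (s^2) k).symm.trans (qpoch_succ _ _ k)
    rw [show s^2/(x/s^2) = s^2/x*s^2 by field_simp]
    calc _ = -(x/s^2) * ((1 - s^2/x) * qpoch (s^2/x*s^2) (s^2) k) := by field_simp; ring
      _ = _ := by rw [h]; field_simp; ring
  have hD := qpoch_sq_two_mul s k
  have hD0 : qpoch ((s^2)^2) (s^2) (2*k) ≠ 0 :=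
    qpoch_ne_zero fun i _ => by rw [← pow_add]; exact hrq _ (by omega)
  rw [mul_div_cancel₀ x hq]
  have hP : qpoch (s^2) (s^2) k * qpoch (-s^2) (s^2) k * qpoch (s^2*s) (s^2) k *
      qpoch (-s) (s^2) k = qpoch ((s^2)^2) (s^2) (2*k) * (1 + s) / (1 + s * (s^2)^k) :=
    eq_div_of_mul_eq hsk hD.symm
  have hcomb : (1 - x) / ((1 + s) * (1 - x/s)) *
        (qpoch (s^2*x) (s^2) k * qpoch (s^2/x) (s^2) k) +
      (1 - x/s^2) / ((1 + 1/s) * (1 - x/s)) *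
        (qpoch x (s^2) k * qpoch (s^2/(x/s^2)) (s^2) k) =
      (1 + s * (s^2)^k) / (1 + s) * (qpoch x (s^2) k * qpoch (s^2/x) (s^2) k) := by
    have e1 : (1 + s) * (1 - x/s) ≠ 0 := by
      apply mul_ne_zero hs1; rw [one_sub_div hs]; exact div_ne_zero hsx hs
    have e2 : (1 + 1/s) = (1 + s)/s := by field_simp; ring
    calc _ = (((1 - x) * qpoch (s^2*x) (s^2) k) * qpoch (s^2/x) (s^2) k +
          s * (qpoch x (s^2) k * ((1 - x/s^2) * qpoch (s^2/(x/s^2)) (s^2) k))) /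
          ((1 + s) * (1 - x/s)) := by
            rw [e2]; field_simp
      _ = ((1 + s * (s^2)^k) * (1 - x/s)) * (qpoch x (s^2) k * qpoch (s^2/x) (s^2) k) /
          ((1 + s) * (1 - x/s)) := by
            rw [h1, h2]; congr 1; field_simp; ring
      _ = _ := by
            rw [one_sub_div hs]; field_simp
  rw [hP]
  calc _ = gosperCoeff (s^2) n k *
        ((1 + s * (s^2)^k) / (1 + s) * (qpoch x (s^2) k * qpoch (s^2/x) (s^2) k)) := by
          rw [gosperCoeff]; field_simp
    _ = _ := by rw [← hcomb]; ring

theorem ContinuousAt.qpoch {f g : ℂ → ℂ} {s : ℂ} (hf : ContinuousAt f s) (hg : ContinuousAt g s)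
    (k : ℕ) : ContinuousAt (fun t => _root_.qpoch (f t) (g t) k) s := by
  unfold _root_.qpoch
  fun_prop

theorem countable_roots_of_unity : {s : ℂ | ∃ j : ℕ, 0 < j ∧ s ^ j = 1}.Countable := by
  have : {s : ℂ | ∃ j : ℕ, 0 < j ∧ s ^ j = 1} = ⋃ j : ℕ, {s | 0 < j ∧ s ^ j = 1} := by
    ext; simp
  rw [this]
  refine Set.countable_iUnion fun j => Set.Finite.countable ?_
  refine (Polynomial.nthRoots j (1 : ℂ)).toFinset.finite_toSet.subset fun s hs => ?_
  simpa [Polynomial.mem_nthRoots hs.1] using hs.2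

theorem q_gosper_second_ext_ell_one (n : ℕ) (q x s : ℂ) (hs : s ^ 2 = q)
    (hq : q ≠ 0) (hx : x ≠ 0) (hxs : x ≠ s) (hx2 : x ^ 2 ≠ q) (hs1 : 1 + s ≠ 0)
    (hden : ∀ k ≤ n,
      qpoch q q k * qpoch (-q) q k * qpoch (q*s) q k * qpoch (-s) q k *
        qpoch (q ^ (-1 - 3*n : ℤ)) q k ≠ 0)
    (hden2 : qpoch (q^2) (q^3) n * qpoch (q^4) (q^3) n ≠ 0) :
    ∑ k ∈ Finset.range (n+1),
      qpoch (q ^ (-(3*n : ℤ))) (q^3) k * (qpoch x q k * qpoch (q/x) q k) /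
        (qpoch q q k * qpoch (-q) q k * qpoch (q*s) q k * qpoch (-s) q k *
          qpoch (q ^ (-1 - 3*n : ℤ)) q k) * q^k
      = (1 - x) / ((1 + s) * (1 - x/s)) *
          ((qpoch (q^3*x) (q^3) n * qpoch (q^3/x) (q^3) n) /
            (qpoch (q^2) (q^3) n * qpoch (q^4) (q^3) n))
        + (1 - x/q) / ((1 + 1/s) * (1 - x/s)) *
          ((qpoch (q^2*x) (q^3) n * qpoch (q^4/x) (q^3) n) /
            (qpoch (q^2) (q^3) n * qpoch (q^4) (q^3) n)) := by
  subst hs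
  have hs0 : s ≠ 0 := fun h => hq (by simp [h])
  have hfreq : ∃ᶠ t in nhds s, ∀ j : ℕ, 0 < j → t ^ j ≠ 1 := by
    have h := (countable_roots_of_unity.dense_compl ℝ) s
    rw [mem_closure_iff_frequently] at h
    exact h.mono fun t ht j hj e => ht ⟨j, hj, e⟩
  have hev : ∀ᶠ t in nhds s, t ≠ 0 ∧ x ≠ t :=
    (eventually_ne_nhds hs0).and ((eventually_ne_nhds hxs.symm).mono fun _ h => h.symm)
  have hid : ContinuousAt (fun t : ℂ => t) s := continuousAt_id
  have hc (c : ℂ) : ContinuousAt (fun _ : ℂ => c) s := continuousAt_const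
  have hsq : ContinuousAt (fun t : ℂ => t^2) s := hid.pow 2
  have hzp : ∀ m : ℤ, ContinuousAt (fun t : ℂ => (t^2) ^ m) s := fun m =>
    hsq.zpow₀ m (Or.inl hq)
  have hxs' : 1 - x/s ≠ 0 := by
    rw [one_sub_div hs0]; exact div_ne_zero (sub_ne_zero.2 hxs.symm) hs0
  have hs1' : 1 + 1/s ≠ 0 := by
    rw [one_add_div hs0, add_comm]; exact div_ne_zero hs1 hs0
  refine tendsto_nhds_unique_of_frequently_eq ?_ ?_
    ((hfreq.and_eventually hev).mono fun t ht =>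
      gosper_sum_of_not_root_of_unity n ht.2.1 hx ht.2.2 ht.1)
  · refine tendsto_finsetSum _ fun k hk => ?_
    have hk' := hden k (Nat.lt_succ_iff.1 (Finset.mem_range.1 hk))
    refine ContinuousAt.mul (ContinuousAt.div ?_ ?_ hk') (hsq.pow k)
    · exact ((hzp _).qpoch (hsq.pow 3) k).mul (((hc _).qpoch hsq k).mul ((hsq.div_const x).qpoch hsq k))
    · exact ((((hsq.qpoch hsq k).mul (hsq.neg.qpoch hsq k)).mul ((hsq.mul hid).qpoch hsq k)).mul
        (hid.neg.qpoch hsq k)).mul ((hzp _).qpoch hsq k)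
  · have hden' : ContinuousAt (fun t : ℂ =>
        qpoch ((t^2)^2) ((t^2)^3) n * qpoch ((t^2)^4) ((t^2)^3) n) s :=
      ((hsq.pow 2).qpoch (hsq.pow 3) n).mul ((hsq.pow 4).qpoch (hsq.pow 3) n)
    have hxd : ContinuousAt (fun t : ℂ => 1 - x/t) s := (hc _).sub ((hc _).div hid hs0)
    refine ContinuousAt.add (ContinuousAt.mul ?_ (ContinuousAt.div ?_ hden' hden2))
      (ContinuousAt.mul ?_ (ContinuousAt.div ?_ hden' hden2))
    · exact (hc _).div (((hc _).add hid).mul hxd) (mul_ne_zero hs1 hxs')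
    · exact (((hsq.pow 3).mul (hc _)).qpoch (hsq.pow 3) n).mul
        (((hsq.pow 3).div_const x).qpoch (hsq.pow 3) n)
    · exact ((hc _).sub ((hc _).div hsq hq)).div (((hc _).add ((hc _).div hid hs0)).mul hxd)
        (mul_ne_zero hs1' hxs')
    · exact (((hsq.pow 2).mul (hc _)).qpoch (hsq.pow 3) n).mul
        (((hsq.pow 4).div_const x).qpoch (hsq.pow 3) n)
end

section
/- For every nonnegative integer ℓ, nonnegative integer n, and complex number x such that no denominator vanishes: sum over k from 0 to n of ((3x)_k (2-ℓ-3x)_k (-n)_k)/(k! (3/2)_k (-1-3n)_k) * (3/4)^k equals ((3x-1)_ℓ/(6x-1)_ℓ) * sum over i from 0 to ℓ of (-1)^i * ((3x+i-1)/(3x-1))^2 * ((-ℓ)_i (6x-2)_i)/(i! (6x+ℓ-1)_i) * (((2+i)/3 + x)_n ((4-i)/3 - x)_n)/((2/3)_n (4/3)_n). (Generalization of Gosper's second identity with an extra integer parameter.) -/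
/-- Pochhammer symbol (rising factorial) `(a)_k`. -/
noncomputable def poch (a : ℂ) (k : ℕ) : ℂ := ∏ j ∈ Finset.range k, (a + j)

theorem poch_zero (a : ℂ) : poch a 0 = 1 := by simp [poch]

theorem poch_succ (a : ℂ) (k : ℕ) : poch a (k + 1) = poch a k * (a + k) := by
  simp [poch, Finset.prod_range_succ]

theorem poch_succ_left (a : ℂ) (k : ℕ) : poch a (k + 1) = a * poch (a + 1) k := by
  simp only [poch, Finset.prod_range_succ']
  rw [mul_comm]
  congr 1
  · simp
  · refine Finset.prod_congr rfl fun j _ => ?_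
    push_cast
    ring

theorem poch_add (a : ℂ) (m k : ℕ) : poch a (m + k) = poch a m * poch (a + m) k := by
  simp only [poch, Finset.prod_range_add]
  congr 1
  refine Finset.prod_congr rfl fun j _ => ?_
  push_cast
  ring

theorem add_natCast_ne_zero_of_poch_ne_zero {a : ℂ} {k j : ℕ} (h : poch a k ≠ 0) (hj : j < k) :
    a + j ≠ 0 := by
  rw [poch, Finset.prod_ne_zero_iff] at h
  exact h j (Finset.mem_range.2 hj)

theorem poch_ne_zero_of_le {a : ℂ} {m k : ℕ} (h : poch a k ≠ 0) (hm : m ≤ k) :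
    poch a m ≠ 0 := by
  rw [poch, Finset.prod_ne_zero_iff] at h ⊢
  exact fun j hj => h j (Finset.range_mono hm hj)

theorem poch_ne_zero_of_pos {a : ℝ} (ha : 0 < a) (k : ℕ) : poch (a : ℂ) k ≠ 0 := by
  rw [poch, Finset.prod_ne_zero_iff]
  intro j _
  have : a + j ≠ 0 := by positivity
  exact_mod_cast this

theorem natCast_sub_ne_zero {m k : ℕ} (h : k < m) : (m : ℂ) - k ≠ 0 := by
  rw [sub_ne_zero]
  exact_mod_cast h.ne'

theorem poch_neg_ne_zero {m k : ℕ} (h : k ≤ m) : poch (-(m : ℂ)) k ≠ 0 := by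
  rw [poch, Finset.prod_ne_zero_iff]
  intro j hj
  have := natCast_sub_ne_zero ((Finset.mem_range.1 hj).trans_le h)
  rw [← neg_ne_zero]
  convert this using 1
  ring

theorem poch_neg_eq_choose (m i : ℕ) :
    (-1 : ℂ) ^ i * poch (-(m : ℂ)) i = (i.factorial : ℂ) * (m.choose i : ℂ) := by
  induction i with
  | zero => simp [poch_zero]
  | succ i ih =>
    have key : (m.choose (i + 1) : ℂ) * (i + 1) = m.choose i * (m - i) := by
      rcases le_or_gt i m with h | h
      · have := Nat.choose_succ_right_eq m i
        rw [← Nat.cast_sub h]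
        exact_mod_cast this
      · simp [Nat.choose_eq_zero_of_lt h, Nat.choose_eq_zero_of_lt (h.trans (Nat.lt_succ_self i))]
    rw [poch_succ, Nat.factorial_succ, pow_succ]
    push_cast
    linear_combination (-1 : ℂ) * (-(m : ℂ) + i) * ih - (i.factorial : ℂ) * key

/-- The factor of the Gosper summand that does not depend on the free parameter. -/
noncomputable def gosperWeight (n k : ℕ) : ℂ :=
  poch (-(n : ℂ)) k /
    ((Nat.factorial k : ℂ) * poch (3/2) k * poch (-1 - 3*n : ℂ) k) * (3/4 : ℂ)^k

theorem poch_three_halves_ne_zero (k : ℕ) : poch (3/2) k ≠ 0 := by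
  have := poch_ne_zero_of_pos (a := 3/2) (by norm_num) k
  push_cast at this
  exact this

theorem poch_neg_one_sub_ne_zero {n k : ℕ} (h : k ≤ 3 * n + 1) : poch (-1 - 3*n : ℂ) k ≠ 0 := by
  have := poch_neg_ne_zero h
  push_cast at this
  convert this using 2
  ring

theorem gosperWeight_zero (n : ℕ) : gosperWeight n 0 = 1 := by
  simp [gosperWeight, poch_zero]

theorem gosperWeight_succ_right {n k : ℕ} (h : k < 3 * n + 1) :
    gosperWeight n (k + 1) * ((k + 1) * (3/2 + k) * (3 * n + 1 - k)) =
      gosperWeight n k * ((n - k) * (3/4)) := by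
  have h1 := poch_three_halves_ne_zero k
  have h2 := poch_neg_one_sub_ne_zero h.le
  have h3 : (k.factorial : ℂ) ≠ 0 := by exact_mod_cast k.factorial_ne_zero
  have h4 : (k : ℂ) + 1 ≠ 0 := by exact_mod_cast k.succ_ne_zero
  have h5 := add_natCast_ne_zero_of_poch_ne_zero (poch_three_halves_ne_zero (k + 1)) k.lt_succ_self
  have h6 := add_natCast_ne_zero_of_poch_ne_zero (poch_neg_one_sub_ne_zero (n := n) (k := k + 1) h)
    k.lt_succ_self
  simp only [gosperWeight, poch_succ, Nat.factorial_succ, pow_succ]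
  push_cast
  generalize poch (3/2) k = A at *
  generalize poch (-1 - 3*n : ℂ) k = B at *
  generalize hd : (3/2 + k : ℂ) = D at *
  generalize he : (-1 - 3*n + k : ℂ) = E at *
  rw [show (3 * n + 1 - k : ℂ) = -E by rw [← he]; ring]
  field_simp
  ring

theorem gosperWeight_succ_left {n k : ℕ} (h : k ≤ 3 * n + 1) :
    gosperWeight (n + 1) k * ((n + 1 - k) * (3 * n + 4) * (3 * n + 3) * (3 * n + 2)) =
      gosperWeight n k *
        ((n + 1) * (3 * n + 4 - k) * (3 * n + 3 - k) * (3 * n + 2 - k)) := by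
  have h1 := poch_three_halves_ne_zero k
  have h2 := poch_neg_one_sub_ne_zero h
  have h3 : (k.factorial : ℂ) ≠ 0 := by exact_mod_cast k.factorial_ne_zero
  have h4 : poch (-1 - 3*((n + 1 : ℕ) : ℂ)) k ≠ 0 :=
    poch_neg_one_sub_ne_zero (n := n + 1) (by omega)
  have shift (a : ℂ) : poch a k * (a + k) = a * poch (a + 1) k := by
    rw [← poch_succ, poch_succ_left]
  have e0 := shift (-((n + 1 : ℕ) : ℂ))
  have e1 := shift (-1 - 3*((n + 1 : ℕ) : ℂ))
  have e2 := shift (-1 - 3*((n + 1 : ℕ) : ℂ) + 1)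
  have e3 := shift (-1 - 3*((n + 1 : ℕ) : ℂ) + 1 + 1)
  rw [show -((n + 1 : ℕ) : ℂ) + 1 = -(n : ℂ) by push_cast; ring] at e0
  rw [show -1 - 3*((n + 1 : ℕ) : ℂ) + 1 + 1 + 1 = -1 - 3 * (n : ℂ) by push_cast; ring] at e3
  simp only [gosperWeight]
  generalize poch (3/2) k = A at *
  generalize poch (-1 - 3*n : ℂ) k = B at *
  generalize poch (-1 - 3*((n + 1 : ℕ) : ℂ)) k = B1 at *
  generalize poch (-1 - 3*((n + 1 : ℕ) : ℂ) + 1) k = B2 at *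
  generalize poch (-1 - 3*((n + 1 : ℕ) : ℂ) + 1 + 1) k = B3 at *
  generalize poch (-((n + 1 : ℕ) : ℂ)) k = C1 at *
  generalize poch (-(n : ℂ)) k = C at *
  push_cast at e0 e1 e2 e3
  have e : B1 * ((3 * n + 4 - k) * (3 * n + 3 - k) * (3 * n + 2 - k)) =
      (3 * n + 4) * (3 * n + 3) * (3 * n + 2) * B := by
    linear_combination -(3 * n + 3 - k) * (3 * n + 2 - k : ℂ) * e1 -
      (3 * n + 4) * (3 * n + 2 - k : ℂ) * e2 - (3 * n + 4) * (3 * n + 3 : ℂ) * e3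
  have e' : C1 * (n + 1 - k) = (n + 1) * C := by linear_combination -e0
  field_simp
  linear_combination 3 * (3 * n + 4) * (3 * n + 2) * B * e' - C * e

/-- Partial sums of the creative telescoping relation behind Gosper's identity. -/
theorem gosper_telescope (y : ℂ) {n m : ℕ} (hm : m ≤ n) :
    ∑ k ∈ Finset.range (m + 1), poch y k * poch (2 - y) k *
      ((2/3 + n) * (4/3 + n) * gosperWeight (n + 1) k
        - ((2 + y)/3 + n) * ((4 - y)/3 + n) * gosperWeight n k) =
      -(1/9) * (poch y (m + 1) * poch (2 - y) (m + 1) * gosperWeight n m) := by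
  induction m with
  | zero =>
    simp only [zero_add, Finset.sum_range_one, poch_zero, gosperWeight_zero, poch_succ]
    push_cast
    ring
  | succ m ih =>
    rw [Finset.sum_range_succ, ih (by omega), poch_succ y (m + 1), poch_succ (2 - y) (m + 1)]
    have s1 := gosperWeight_succ_right (n := n) (k := m) (by omega)
    have s2 := gosperWeight_succ_left (n := n) (k := m + 1) (by omega)
    have d1 : (n : ℂ) - m ≠ 0 := natCast_sub_ne_zero (by omega)
    have d2 : (3 * n + 4 : ℂ) ≠ 0 := by exact_mod_cast (by omega : 3 * n + 4 ≠ 0)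
    have d3 : (3 * n + 3 : ℂ) ≠ 0 := by exact_mod_cast (by omega : 3 * n + 3 ≠ 0)
    have d4 : (3 * n + 2 : ℂ) ≠ 0 := by exact_mod_cast (by omega : 3 * n + 2 ≠ 0)
    push_cast at s2 ⊢
    have s1' : gosperWeight n m =
        gosperWeight n (m + 1) * ((m + 1) * (3/2 + m) * (3 * n + 1 - m)) / ((n - m) * (3/4)) := by
      rw [s1]
      field_simp
    have s2' : gosperWeight (n + 1) (m + 1) = gosperWeight n (m + 1) *
        ((n + 1) * (3 * n + 3 - m) * (3 * n + 2 - m) * (3 * n + 1 - m)) /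
        ((n - m) * (3 * n + 4) * (3 * n + 3) * (3 * n + 2)) := by
      rw [eq_div_iff (by simp [*])]
      linear_combination s2
    rw [s1', s2']
    field_simp
    ring

theorem gosper_second (y : ℂ) (n : ℕ) :
    ∑ k ∈ Finset.range (n + 1), poch y k * poch (2 - y) k * gosperWeight n k =
      poch ((2 + y)/3) n * poch ((4 - y)/3) n / (poch (2/3) n * poch (4/3) n) := by
  induction n with
  | zero => simp [poch_zero, gosperWeight_zero]
  | succ n ih =>
    have hT := gosper_telescope y (le_refl n)
    have d1 : (2/3 + n : ℂ) ≠ 0 := by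
      have : ((2/3 + n : ℝ) : ℂ) ≠ 0 := Complex.ofReal_ne_zero.2 (by positivity)
      push_cast at this
      exact this
    have d2 : (4/3 + n : ℂ) ≠ 0 := by
      have : ((4/3 + n : ℝ) : ℂ) ≠ 0 := Complex.ofReal_ne_zero.2 (by positivity)
      push_cast at this
      exact this
    have d3 : (n + 1 : ℂ) ≠ 0 := by exact_mod_cast (by omega : n + 1 ≠ 0)
    have hlast : (2/3 + n) * (4/3 + n) * gosperWeight (n + 1) (n + 1) =
        1/9 * gosperWeight n n := by
      have s1 := gosperWeight_succ_right (n := n + 1) (k := n) (by omega)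
      have s2 := gosperWeight_succ_left (n := n) (k := n) (by omega)
      push_cast at s1 s2
      have h5 : (2 * n + 4 : ℂ) ≠ 0 := by exact_mod_cast (by omega : 2 * n + 4 ≠ 0)
      have h6 : (2 * n + 3 : ℂ) ≠ 0 := by exact_mod_cast (by omega : 2 * n + 3 ≠ 0)
      have : ((n + 1) * (2 * n + 3) * (2 * n + 4) * (n + 1) : ℂ) ≠ 0 := by simp [*]
      refine mul_left_cancel₀ this ?_
      linear_combination (2 * (n + 1) * (2/3 + n) * (4/3 + n) : ℂ) * s1 + (1/18 : ℂ) * s2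
    simp only [mul_sub, Finset.sum_sub_distrib] at hT
    have hsum : (2/3 + n) * (4/3 + n) *
        ∑ k ∈ Finset.range (n + 1 + 1), poch y k * poch (2 - y) k * gosperWeight (n + 1) k =
        ((2 + y)/3 + n) * ((4 - y)/3 + n) *
        ∑ k ∈ Finset.range (n + 1), poch y k * poch (2 - y) k * gosperWeight n k := by
      rw [Finset.sum_range_succ, mul_add, Finset.mul_sum, Finset.mul_sum]
      have a1 := Finset.sum_congr (rfl : Finset.range (n + 1) = _) fun k _ =>
        (mul_left_comm (poch y k * poch (2 - y) k) ((2/3 + n) * (4/3 + n))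
          (gosperWeight (n + 1) k))
      have a2 := Finset.sum_congr (rfl : Finset.range (n + 1) = _) fun k _ =>
        (mul_left_comm (poch y k * poch (2 - y) k) (((2 + y)/3 + n) * ((4 - y)/3 + n))
          (gosperWeight n k))
      rw [a1, a2] at hT
      linear_combination hT + poch y (n + 1) * poch (2 - y) (n + 1) * hlast
    rw [ih] at hsum
    refine mul_left_cancel₀ (mul_ne_zero d1 d2) (hsum.trans ?_)
    simp only [poch_succ]
    generalize (2/3 + n : ℂ) = A at *
    generalize (4/3 + n : ℂ) = B at *
    field_simp

/-- Coefficients expressing `(y)_k (2 - ℓ - y)_k` through `(y + i)_k (2 - y - i)_k`. -/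
noncomputable def shiftCoeff (ℓ i : ℕ) (y : ℂ) : ℂ :=
  (ℓ.choose i : ℂ) * poch (y - 1) ℓ * (y + i - 1)^2 * poch (2*y - 2) i /
    ((y - 1)^2 * poch (2*y - 1) (ℓ + i))

theorem shiftCoeff_of_lt {ℓ i : ℕ} (h : ℓ < i) (y : ℂ) : shiftCoeff ℓ i y = 0 := by
  simp [shiftCoeff, Nat.choose_eq_zero_of_lt h]

theorem shiftCoeff_succ_zero {ℓ : ℕ} {y : ℂ} (h1 : y - 1 ≠ 0) (h : poch (2*y - 1) (ℓ + 1) ≠ 0) :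
    shiftCoeff (ℓ + 1) 0 y = (y + ℓ - 1) / (2*y + ℓ - 1) * shiftCoeff ℓ 0 y := by
  have h2 := add_natCast_ne_zero_of_poch_ne_zero h ℓ.lt_succ_self
  have h3 := poch_ne_zero_of_le h ℓ.le_succ
  simp only [shiftCoeff, add_zero, poch_succ, poch_zero, Nat.choose_zero_right]
  rw [show 2*y + ℓ - 1 = 2*y - 1 + ℓ by ring]
  generalize poch (2*y - 1) ℓ = A at *
  generalize 2*y - 1 + ℓ = B at *
  field_simp
  push_cast
  ring

theorem shiftCoeff_succ_succ {ℓ i : ℕ} {y : ℂ} (hi : i ≤ ℓ) (h1 : y - 1 ≠ 0)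
    (h : poch (2*y - 1) (2 * (ℓ + 1)) ≠ 0) :
    shiftCoeff (ℓ + 1) (i + 1) y = (y + ℓ - 1) / (2*y + ℓ - 1) * shiftCoeff ℓ (i + 1) y +
      y / (2*y + ℓ - 1) * shiftCoeff ℓ i (y + 1) := by
  have n0 : 2*y - 1 ≠ 0 := by
    simpa using add_natCast_ne_zero_of_poch_ne_zero (j := 0) h (by omega)
  have n1 : y ≠ 0 := by
    have := add_natCast_ne_zero_of_poch_ne_zero (j := 1) h (by omega)
    rintro rfl
    simp at this
  have n2 := add_natCast_ne_zero_of_poch_ne_zero (j := ℓ) h (by omega)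
  have n3 := add_natCast_ne_zero_of_poch_ne_zero (j := ℓ + i + 1) h (by omega)
  have n4 := poch_ne_zero_of_le (m := ℓ + i + 1) h (by omega)
  have n5 : (i + 1 : ℂ) ≠ 0 := by exact_mod_cast i.succ_ne_zero
  have e1 : poch (y - 1) (ℓ + 1) = (y - 1) * poch y ℓ := by
    rw [poch_succ_left]; ring_nf
  have e2 : poch (2*y - 2) (i + 1) * (2*y - 2 + (i + 1 : ℕ)) =
      (2*y - 2) * ((2*y - 1) * poch (2*y) i) := by
    rw [← poch_succ, poch_succ_left, poch_succ_left]; ring_nf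
  have e3 : poch (2*y - 1) (ℓ + i + 1) * (2*y - 1 + (ℓ + i + 1 : ℕ)) =
      (2*y - 1) * (2*y * poch (2*y + 1) (ℓ + i)) := by
    rw [← poch_succ, poch_succ_left, poch_succ_left]; ring_nf
  have e4 : poch (2*y - 1) (ℓ + 1 + (i + 1)) =
      poch (2*y - 1) (ℓ + i + 1) * (2*y - 1 + (ℓ + i + 1 : ℕ)) := by
    rw [← poch_succ]; ring_nf
  have c1 : ((ℓ.choose (i + 1) : ℕ) : ℂ) = ℓ.choose i * (ℓ - i) / (i + 1) := by
    rw [eq_div_iff n5, ← Nat.cast_sub hi]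
    exact_mod_cast Nat.choose_succ_right_eq ℓ i
  simp only [shiftCoeff, Nat.choose_succ_succ]
  rw [e4, show y + 1 - 1 = y by ring, show 2*(y + 1) - 2 = 2*y by ring,
    show 2*(y + 1) - 1 = 2*y + 1 by ring, ← add_assoc ℓ i 1,
    show 2*y + ℓ - 1 = 2*y - 1 + ℓ by ring]
  rw [poch_succ] at e1
  push_cast [c1] at *
  have e3' : poch (2*y + 1) (ℓ + i) =
      poch (2*y - 1) (ℓ + i + 1) * (2*y - 1 + (ℓ + i + 1)) / ((2*y - 1) * (2*y)) := by
    rw [eq_div_iff (by simp [*])]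
    linear_combination -e3
  have e1' : poch y ℓ = poch (y - 1) ℓ * (y - 1 + ℓ) / (y - 1) := by
    rw [eq_div_iff h1]
    linear_combination -e1
  have e2' : poch (2*y) i =
      poch (2*y - 2) (i + 1) * (2*y - 2 + (i + 1)) / ((2*y - 1) * (2*(y - 1))) := by
    rw [eq_div_iff (by simp [*])]
    linear_combination -e2
  rw [e3', e2', e1', poch_succ (y - 1)]
  generalize poch (2*y - 1) (ℓ + i + 1) = A at *
  generalize poch (2*y - 2) (i + 1) = B at *
  generalize poch (y - 1) ℓ = C at *
  generalize hN : 2*y - 1 + (ℓ + i + 1 : ℂ) = N at *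
  generalize hM : 2*y - 1 + (ℓ : ℂ) = M at *
  generalize hK : 2*y - 1 = K at *
  field_simp
  subst hN hM hK
  ring

theorem poch_mul_poch_contiguous (y : ℂ) (ℓ k : ℕ) :
    (2*y + ℓ - 1) * (poch y k * poch (1 - ℓ - y) k) =
      (y + ℓ - 1) * (poch y k * poch (2 - ℓ - y) k) +
        y * (poch (y + 1) k * poch (1 - ℓ - y) k) := by
  have e1 : poch y k * (y + k) = y * poch (y + 1) k := by rw [← poch_succ, poch_succ_left]
  have e2 : poch (1 - ℓ - y) k * (1 - ℓ - y + k) = (1 - ℓ - y) * poch (2 - ℓ - y) k := by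
    rw [← poch_succ, poch_succ_left]; ring_nf
  linear_combination poch (1 - ℓ - y) k * e1 - poch y k * e2

theorem poch_mul_poch_eq_sum (k ℓ : ℕ) {y : ℂ} (h1 : y - 1 ≠ 0)
    (h : poch (2*y - 1) (2 * ℓ) ≠ 0) :
    poch y k * poch (2 - ℓ - y) k =
      ∑ i ∈ Finset.range (ℓ + 1), shiftCoeff ℓ i y * (poch (y + i) k * poch (2 - (y + i)) k) := by
  induction ℓ generalizing y with
  | zero =>
    simp [shiftCoeff, poch_zero, h1]
  | succ ℓ ih =>
    have n2 := add_natCast_ne_zero_of_poch_ne_zero (j := ℓ) h (by omega)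
    rw [show 2*y - 1 + ℓ = 2*y + ℓ - 1 by ring] at n2
    have n1 : y ≠ 0 := by
      have := add_natCast_ne_zero_of_poch_ne_zero (j := 1) h (by omega)
      rintro rfl
      simp at this
    have hs : poch (2*(y + 1) - 1) (2 * ℓ) ≠ 0 := by
      rw [show 2 * (ℓ + 1) = 2 * ℓ + 1 + 1 by ring, poch_succ_left, poch_succ_left] at h
      convert right_ne_zero_of_mul (right_ne_zero_of_mul h) using 2
      ring
    have ih1 := ih h1 (poch_ne_zero_of_le h (by omega))
    have ih2 := ih (y := y + 1) (by simpa using n1) hs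
    have key := poch_mul_poch_contiguous y ℓ k
    rw [show (2 - ℓ - (y + 1) : ℂ) = 1 - ℓ - y by ring] at ih2
    rw [ih1, ih2] at key
    rw [show (2 - (ℓ + 1 : ℕ) - y : ℂ) = 1 - ℓ - y by push_cast; ring]
    refine mul_left_cancel₀ n2 (key.trans ?_)
    have hcoeff : ∀ i ∈ Finset.range (ℓ + 1),
        (2*y + ℓ - 1) * (shiftCoeff (ℓ + 1) (i + 1) y *
          (poch (y + (i + 1 : ℕ)) k * poch (2 - (y + (i + 1 : ℕ))) k)) =
        (y + ℓ - 1) * (shiftCoeff ℓ (i + 1) y *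
          (poch (y + (i + 1 : ℕ)) k * poch (2 - (y + (i + 1 : ℕ))) k)) +
        y * (shiftCoeff ℓ i (y + 1) * (poch (y + 1 + i) k * poch (2 - (y + 1 + i)) k)) := by
      intro i hi
      rw [shiftCoeff_succ_succ (Finset.mem_range_succ_iff.1 hi) h1 h,
        show y + ((i + 1 : ℕ) : ℂ) = y + 1 + i by push_cast; ring]
      field_simp
    have hz : ∑ i ∈ Finset.range (ℓ + 1), shiftCoeff ℓ i y *
        (poch (y + i) k * poch (2 - (y + i)) k) =
        ∑ i ∈ Finset.range (ℓ + 1), shiftCoeff ℓ (i + 1) y *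
          (poch (y + (i + 1 : ℕ)) k * poch (2 - (y + (i + 1 : ℕ))) k) +
        shiftCoeff ℓ 0 y * (poch (y + (0 : ℕ)) k * poch (2 - (y + (0 : ℕ))) k) := by
      rw [← Finset.sum_range_succ' (fun i => shiftCoeff ℓ i y *
        (poch (y + i) k * poch (2 - (y + i)) k)) (ℓ + 1), Finset.sum_range_succ _ (ℓ + 1),
        shiftCoeff_of_lt ℓ.lt_succ_self, zero_mul, add_zero]
    have hS := Finset.sum_congr rfl hcoeff
    simp only [Finset.sum_add_distrib, ← Finset.mul_sum] at hS
    rw [hz, Finset.sum_range_succ' _ (ℓ + 1), mul_add (2*y + ℓ - 1), hS,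
      shiftCoeff_succ_zero h1 (poch_ne_zero_of_le h (by omega)), ← mul_assoc (2*y + ℓ - 1),
      ← mul_assoc (2*y + ℓ - 1), mul_div_cancel₀ _ n2]
    ring

theorem gosper_second_extension (ℓ n : ℕ) (x : ℂ)
    (h3x : 3*x - 1 ≠ 0) (h6xℓ : poch (6*x - 1) ℓ ≠ 0)
    (hdeni : ∀ i ≤ ℓ, poch (6*x + ℓ - 1) i ≠ 0)
    (hden : ∀ k ≤ n, poch (3/2) k ≠ 0 ∧ poch (-1 - 3*n : ℂ) k ≠ 0)
    (h23 : poch (2/3) n ≠ 0) (h43 : poch (4/3) n ≠ 0) :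
    ∑ k ∈ Finset.range (n+1),
      (poch (3*x) k * poch (2 - ℓ - 3*x) k * poch (-(n : ℂ)) k) /
        ((Nat.factorial k : ℂ) * poch (3/2) k * poch (-1 - 3*n : ℂ) k) * (3/4 : ℂ)^k
      = poch (3*x - 1) ℓ / poch (6*x - 1) ℓ *
        ∑ i ∈ Finset.range (ℓ+1),
          (-1 : ℂ)^i * ((3*x + i - 1) / (3*x - 1))^2 *
            (poch (-(ℓ : ℂ)) i * poch (6*x - 2) i) /
            ((Nat.factorial i : ℂ) * poch (6*x + ℓ - 1) i) *
            ((poch ((2 + i)/3 + x) n * poch ((4 - i)/3 - x) n) /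
              (poch (2/3) n * poch (4/3) n)) := by
  have hy : poch (2*(3*x) - 1) (2 * ℓ) ≠ 0 := by
    rw [two_mul ℓ, poch_add]
    refine mul_ne_zero ?_ ?_
    · convert h6xℓ using 2
      ring
    · convert hdeni ℓ le_rfl using 2
      ring
  have hL : ∀ k, (poch (3*x) k * poch (2 - ℓ - 3*x) k * poch (-(n : ℂ)) k) /
        ((Nat.factorial k : ℂ) * poch (3/2) k * poch (-1 - 3*n : ℂ) k) * (3/4 : ℂ)^k =
      ∑ i ∈ Finset.range (ℓ + 1), shiftCoeff ℓ i (3*x) *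
        (poch (3*x + i) k * poch (2 - (3*x + i)) k * gosperWeight n k) := by
    intro k
    simp only [← mul_assoc, ← Finset.sum_mul]
    simp only [mul_assoc (shiftCoeff _ _ _), ← poch_mul_poch_eq_sum k ℓ h3x hy, gosperWeight]
    ring
  simp only [hL]
  rw [Finset.sum_comm, Finset.mul_sum]
  refine Finset.sum_congr rfl fun i hi => ?_
  have hiℓ : i ≤ ℓ := Finset.mem_range_succ_iff.1 hi
  rw [← Finset.mul_sum, gosper_second, show (2 + (3*x + i))/3 = (2 + i)/3 + x by ring,
    show (4 - (3*x + i))/3 = (4 - i)/3 - x by ring, ← mul_assoc]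
  congr 1
  have hb := hdeni i hiℓ
  have hf : (i.factorial : ℂ) ≠ 0 := by exact_mod_cast i.factorial_ne_zero
  have hc : (ℓ.choose i : ℂ) = (-1 : ℂ) ^ i * poch (-(ℓ : ℂ)) i / i.factorial := by
    rw [poch_neg_eq_choose, mul_div_cancel_left₀ _ hf]
  rw [shiftCoeff, hc, poch_add, show 2*(3*x) - 1 + ℓ = 6*x + ℓ - 1 by ring,
    show 2*(3*x) - 1 = 6*x - 1 by ring, show 2*(3*x) - 2 = 6*x - 2 by ring]
  generalize poch (6*x + ℓ - 1) i = A at *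
  generalize poch (6*x - 1) ℓ = B at *
  field_simp
end
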